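/- Comparison/simplicity theorem on bounded domains (Theorem A.4, classical-solution rendering): Let λ ∈ ℝ and suppose ψ and φ are C² on D and continuous on D̄ and satisfy: Gψ ≤ λψ in D with ψ > 0 in D; Gφ ≥ λφ in D; φ ≤ 0 on ∂D; and φ(x₀) > 0 for some x₀ ∈ D. Then ψ = t·φ for some t > 0. -/

import Mathlib

open Metric Set MeasureTheory

noncomputable def sdv {d : ℕ} (φ : EuclideanSpace ℝ (Fin d) → ℝ)
    (x : EuclideanSpace ℝ (Fin d)) (i j : Fin d) : ℝ :=
  fderiv ℝ (fun y => fderiv ℝ φ y (EuclideanSpace.single j 1)) x (EuclideanSpace.single i 1)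

/-- The semilinear operator
`Gφ(x) = Σ_{i,j} a_{ij}(x) ∂²φ/∂x_i∂x_j(x) + inf_{u∈U} (b(x,u)·∇φ(x) + r(x,u) φ(x))`. -/
noncomputable def Gop {d : ℕ} {U : Type*}
    (a : EuclideanSpace ℝ (Fin d) → Matrix (Fin d) (Fin d) ℝ)
    (b : EuclideanSpace ℝ (Fin d) → U → EuclideanSpace ℝ (Fin d))
    (r : EuclideanSpace ℝ (Fin d) → U → ℝ)
    (φ : EuclideanSpace ℝ (Fin d) → ℝ) (x : EuclideanSpace ℝ (Fin d)) : ℝ :=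
  (∑ i, ∑ j, a x i j * sdv φ x i j)
    + ⨅ u : U, ((inner ℝ (b x u) (gradient φ x) : ℝ) + r x u * φ x)

/-- The quadratic form `zᵀ A z`. -/
noncomputable def quadForm {d : ℕ}
    (A : Matrix (Fin d) (Fin d) ℝ) (z : EuclideanSpace ℝ (Fin d)) : ℝ :=
  ∑ i, ∑ j, z i * A i j * z j

/-!
Let `t` be the least number with `φ ≤ tψ` on a compact set `K ⊆ D` containing `x₀`, so that
`t > 0`, and put `w = φ - tψ`. A difference of infima is at most the supremum of the differences,
so `w` is a subsolution of the extremal operator `tr(a D²w) + M|∇w| + c|w|`. Two maximum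
principles are then applied to `w`.

* Aleksandrov–Bakelman–Pucci: if `w` has a positive maximum `m` over a set `Ω` of diameter at most
  `L` and `w ≤ 0` on `∂Ω`, then each vector of norm less than `m / L` is the slope of a plane
  touching `w` from above in `Ω`. At such a contact point the equation bounds `|det D²w|` by a
  multiple of `m ^ d`, so the area formula bounds `|Ω|` from below by a constant independent of
  `w`. Hence, once `|D \ K|` is small enough, `w ≤ 0` on `K` and on `∂D` forces `w ≤ 0` on `D`.
* Hopf: `w` vanishes at the point of `K` where `t` is attained, so `w = 0` on `D`.

Since the zeroth-order term has no favourable sign, there is no maximum principle on `D` itself: the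
first argument needs small volume, and the second needs `w ≤ 0` to be known already.
-/

section

open Filter
open scoped Matrix Topology

section SecondOrderCondition

lemma deriv_deriv_nonpos_of_isLocalMax {f : ℝ → ℝ} {x : ℝ} (hmax : IsLocalMax f x)
    (hf : ContinuousAt f x) : deriv (deriv f) x ≤ 0 := by
  by_contra! hpos
  have hmin : IsLocalMin f x := isLocalMin_of_deriv_deriv_pos hpos hmax.deriv_eq_zero hf
  have hconst : f =ᶠ[𝓝 x] fun _ => f x := by
    filter_upwards [hmax, hmin] with y hle hge using le_antisymm hle hge
  have hzero : deriv (deriv f) x = 0 := by simpa using hconst.deriv.deriv_eq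
  exact hpos.ne' hzero

variable {E : Type*} [NormedAddCommGroup E] [NormedSpace ℝ E] {f : E → ℝ} {x : E}

lemma differentiableAt_fderiv_of_contDiffAt_two (hf : ContDiffAt ℝ 2 f x) :
    DifferentiableAt ℝ (fderiv ℝ f) x :=
  (hf.fderiv_right (m := 1) (by norm_num)).differentiableAt (by norm_num)

lemma fderiv_fderiv_apply_self_nonpos_of_isLocalMax (hmax : IsLocalMax f x)
    (hf : ContDiffAt ℝ 2 f x) (z : E) : fderiv ℝ (fderiv ℝ f) x z z ≤ 0 := by
  set line : ℝ → E := fun s => x + s • z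
  have hline (s : ℝ) : HasDerivAt line z s :=
    one_smul ℝ z ▸ ((hasDerivAt_id s).smul_const z).const_add x
  have hline₀ : line 0 = x := by simp [line]
  have hcont : Tendsto line (𝓝 0) (𝓝 x) := hline₀ ▸ (hline 0).continuousAt.tendsto
  have hderiv : deriv (f ∘ line) =ᶠ[𝓝 0] fun s => fderiv ℝ f (line s) z := by
    filter_upwards [hcont.eventually (hf.eventually (by simp))] with s hs
    exact ((hs.differentiableAt (by norm_num)).hasFDerivAt.comp_hasDerivAt s (hline s)).deriv
  have hderiv₂ : deriv (deriv (f ∘ line)) 0 = fderiv ℝ (fderiv ℝ f) x z z := by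
    have hf' := (differentiableAt_fderiv_of_contDiffAt_two hf).hasFDerivAt
    rw [← hline₀] at hf'
    have := (hf'.comp_hasDerivAt 0 (hline 0)).clm_apply (hasDerivAt_const 0 z)
    refine hderiv.deriv_eq.trans (this.deriv.trans ?_)
    simp [hline₀]
  rw [← hderiv₂]
  rw [← hline₀] at hmax hf
  exact deriv_deriv_nonpos_of_isLocalMax (hmax.comp_continuous (hline 0).continuousAt)
    (hf.continuousAt.comp (hline 0).continuousAt)

end SecondOrderCondition

section Gradient

variable {F : Type*} [NormedAddCommGroup F] [InnerProductSpace ℝ F] [CompleteSpace F]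
  {f g : F → ℝ} {x : F}

lemma gradient_sub (hf : DifferentiableAt ℝ f x) (hg : DifferentiableAt ℝ g x) :
    gradient (f - g) x = gradient f x - gradient g x := by
  simp only [gradient, fderiv_sub hf hg, map_sub]

lemma gradient_const_smul (f : F → ℝ) (t : ℝ) : gradient (t • f) = t • gradient f := by
  ext1 x
  simp [gradient, fderiv_const_smul_field]

lemma gradient_toDual (p : F) : gradient (InnerProductSpace.toDual ℝ F p) = fun _ => p := by
  ext1 x
  simp [gradient]

lemma gradient_eq_zero_of_isLocalMax (hmax : IsLocalMax f x) : gradient f x = 0 := by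
  simp [gradient, hmax.fderiv_eq_zero]

lemma differentiableAt_gradient_of_contDiffAt_two (hf : ContDiffAt ℝ 2 f x) :
    DifferentiableAt ℝ (gradient f) x :=
  (InnerProductSpace.toDual ℝ F).symm.toContinuousLinearEquiv.differentiableAt.comp x
    (differentiableAt_fderiv_of_contDiffAt_two hf)

lemma inner_fderiv_gradient (hf : ContDiffAt ℝ 2 f x) (y z : F) :
    inner ℝ (fderiv ℝ (gradient f) x y) z = fderiv ℝ (fderiv ℝ f) x y z := by
  have hfderiv : fderiv ℝ f = fun y => InnerProductSpace.toDual ℝ F (gradient f y) := by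
    simp [gradient]
  have := (InnerProductSpace.toDual ℝ F).toContinuousLinearEquiv.hasFDerivAt.comp x
    (differentiableAt_gradient_of_contDiffAt_two hf).hasFDerivAt
  rw [hfderiv, show fderiv ℝ (fun y => InnerProductSpace.toDual ℝ F (gradient f y)) x = _ from
    this.fderiv]
  simp

end Gradient

section LinearAlgebra

variable {n : Type*} [Fintype n] {A P : Matrix n n ℝ}

lemma mul_trace_le_trace_mul_of_posSemidef {θ : ℝ}
    (hA : ∀ z : n → ℝ, θ * (z ⬝ᵥ z) ≤ z ⬝ᵥ A *ᵥ z) (hP : P.PosSemidef) :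
    θ * P.trace ≤ (A * P).trace := by
  obtain ⟨m, v, rfl⟩ := Matrix.posSemidef_iff_eq_sum_vecMulVec.mp hP
  simp only [star_trivial, Finset.mul_sum, Matrix.trace_sum,
    Matrix.mul_vecMulVec, Matrix.trace_vecMulVec]
  exact Finset.sum_le_sum fun k _ => (hA (v k)).trans_eq (dotProduct_comm _ _)

lemma det_le_trace_pow_of_posSemidef [DecidableEq n] (hP : P.PosSemidef) :
    P.det ≤ P.trace ^ Fintype.card n := by
  have hnonneg := hP.eigenvalues_nonneg
  have htrace : P.trace = ∑ i, hP.1.eigenvalues i := by simpa using hP.1.trace_eq_sum_eigenvalues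
  calc P.det = ∏ i, hP.1.eigenvalues i := by simpa using hP.1.det_eq_prod_eigenvalues
    _ ≤ ∏ _i : n, P.trace := Finset.prod_le_prod (fun i _ => hnonneg i) fun i hi =>
        htrace ▸ Finset.single_le_sum (fun j _ => hnonneg j) hi
    _ = P.trace ^ Fintype.card n := by simp

end LinearAlgebra

section QuadForm

variable {d : ℕ} {A : Matrix (Fin d) (Fin d) ℝ}

lemma quadForm_toLp (A : Matrix (Fin d) (Fin d) ℝ) (z : Fin d → ℝ) :
    quadForm A (WithLp.toLp 2 z) = z ⬝ᵥ A *ᵥ z := by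
  simp only [quadForm, dotProduct, Matrix.mulVec, Finset.mul_sum, mul_assoc]

lemma mul_dotProduct_le_of_quadForm {θ : ℝ} (hA : ∀ z, θ * ‖z‖ ^ 2 ≤ quadForm A z)
    (z : Fin d → ℝ) : θ * (z ⬝ᵥ z) ≤ z ⬝ᵥ A *ᵥ z := by
  have := hA (WithLp.toLp 2 z)
  rw [quadForm_toLp, EuclideanSpace.real_norm_sq_eq] at this
  simpa [dotProduct, sq] using this

lemma trace_le_of_quadForm_le {Λ : ℝ} (hA : ∀ z, quadForm A z ≤ Λ * ‖z‖ ^ 2) :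
    A.trace ≤ d * Λ := by
  have hdiag (i : Fin d) : A i i ≤ Λ := by
    simpa [quadForm, Pi.single_apply] using hA (EuclideanSpace.single i 1)
  calc A.trace ≤ ∑ _i : Fin d, Λ := Finset.sum_le_sum fun i _ => hdiag i
    _ = d * Λ := by simp

end QuadForm

section Hessian

variable {d : ℕ} {v w : EuclideanSpace ℝ (Fin d) → ℝ} {x : EuclideanSpace ℝ (Fin d)}

/-- The Hessian matrix `D²w(x)`, whose entries are the second derivatives `sdv w x i j`. -/
noncomputable def hessian (w : EuclideanSpace ℝ (Fin d) → ℝ) (x : EuclideanSpace ℝ (Fin d)) :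
    Matrix (Fin d) (Fin d) ℝ :=
  Matrix.of (sdv w x)

lemma sdv_const_smul (t : ℝ) (w : EuclideanSpace ℝ (Fin d) → ℝ) (x : EuclideanSpace ℝ (Fin d))
    (i j : Fin d) : sdv (t • w) x i j = t * sdv w x i j := by
  have hpartial : (fun y => fderiv ℝ (t • w) y (EuclideanSpace.single j 1)) =
      t • fun y => fderiv ℝ w y (EuclideanSpace.single j 1) := by
    rw [fderiv_const_smul_field]
    rfl
  rw [sdv, hpartial, fderiv_const_smul_field]
  rfl

lemma hessian_apply (hw : DifferentiableAt ℝ (gradient w) x) (i j : Fin d) :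
    hessian w x i j = fderiv ℝ (gradient w) x (EuclideanSpace.single i 1) j := by
  have hpartial : (fun y => fderiv ℝ w y (EuclideanSpace.single j 1)) =
      EuclideanSpace.proj j ∘ gradient w := by
    ext1 y
    simp [← inner_gradient_left, EuclideanSpace.inner_single_right]
  simp only [hessian, Matrix.of_apply, sdv]
  rw [hpartial, (EuclideanSpace.proj (𝕜 := ℝ) j).hasFDerivAt.comp x hw.hasFDerivAt |>.fderiv]
  simp

lemma hessian_eq_transpose_toMatrix (hw : DifferentiableAt ℝ (gradient w) x) :
    hessian w x = (LinearMap.toMatrix (EuclideanSpace.basisFun (Fin d) ℝ).toBasis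
      (EuclideanSpace.basisFun (Fin d) ℝ).toBasis (fderiv ℝ (gradient w) x).toLinearMap)ᵀ := by
  ext i j
  simp [hessian_apply hw, LinearMap.toMatrix_apply]

lemma det_hessian (hw : DifferentiableAt ℝ (gradient w) x) :
    (hessian w x).det = (fderiv ℝ (gradient w) x).det := by
  rw [hessian_eq_transpose_toMatrix hw, Matrix.det_transpose, LinearMap.det_toMatrix]

lemma isSymm_hessian (hw : ContDiffAt ℝ 2 w x) : (hessian w x).IsSymm := by
  have hentry (i j : Fin d) : hessian w x i j =
      fderiv ℝ (fderiv ℝ w) x (EuclideanSpace.single i 1) (EuclideanSpace.single j 1) := by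
    simp [hessian_apply (differentiableAt_gradient_of_contDiffAt_two hw),
      ← inner_fderiv_gradient hw, EuclideanSpace.inner_single_right]
  refine Matrix.IsSymm.ext fun i j => ?_
  rw [hentry, hentry]
  exact hw.isSymmSndFDerivAt (by simp) _ _

lemma dotProduct_hessian_mulVec (hw : ContDiffAt ℝ 2 w x) (z : Fin d → ℝ) :
    z ⬝ᵥ hessian w x *ᵥ z = fderiv ℝ (fderiv ℝ w) x (WithLp.toLp 2 z) (WithLp.toLp 2 z) := by
  have hgrad := differentiableAt_gradient_of_contDiffAt_two hw
  rw [← inner_fderiv_gradient hw, EuclideanSpace.inner_eq_star_dotProduct, star_trivial,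
    hessian_eq_transpose_toMatrix hgrad, Matrix.mulVec_transpose, dotProduct_comm,
    ← Matrix.dotProduct_mulVec]
  congr 1
  exact LinearMap.toMatrix_mulVec_repr
    (EuclideanSpace.basisFun (Fin d) ℝ).toBasis (EuclideanSpace.basisFun (Fin d) ℝ).toBasis
    (fderiv ℝ (gradient w) x).toLinearMap (WithLp.toLp 2 z)

lemma hessian_sub (hv : ContDiffAt ℝ 2 v x) (hw : ContDiffAt ℝ 2 w x) :
    hessian (v - w) x = hessian v x - hessian w x := by
  have hv' := differentiableAt_gradient_of_contDiffAt_two hv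
  have hw' := differentiableAt_gradient_of_contDiffAt_two hw
  have hgrad : gradient (v - w) =ᶠ[𝓝 x] gradient v - gradient w := by
    filter_upwards [hv.eventually (by simp), hw.eventually (by simp)] with y hvy hwy
    exact gradient_sub (hvy.differentiableAt (by norm_num)) (hwy.differentiableAt (by norm_num))
  have hvw : ContDiffAt ℝ 2 (v - w) x := hv.sub hw
  ext i j
  rw [hessian_apply (differentiableAt_gradient_of_contDiffAt_two hvw), hgrad.fderiv_eq,
    fderiv_sub hv' hw', Matrix.sub_apply, hessian_apply hv', hessian_apply hw']
  simp

lemma hessian_toDual (p x : EuclideanSpace ℝ (Fin d)) :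
    hessian (InnerProductSpace.toDual ℝ _ p) x = 0 := by
  ext i j
  rw [hessian_apply (by simp [gradient_toDual]), gradient_toDual]
  simp

lemma gradient_eq_of_isLocalMax_sub (hw : DifferentiableAt ℝ w x) (hv : DifferentiableAt ℝ v x)
    (hmax : IsLocalMax (w - v) x) : gradient w x = gradient v x := by
  rw [← sub_eq_zero, ← gradient_sub hw hv, gradient_eq_zero_of_isLocalMax hmax]

lemma posSemidef_hessian_sub_of_isLocalMax_sub (hw : ContDiffAt ℝ 2 w x)
    (hv : ContDiffAt ℝ 2 v x) (hmax : IsLocalMax (w - v) x) :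
    (hessian v x - hessian w x).PosSemidef := by
  have hwv : ContDiffAt ℝ 2 (w - v) x := hw.sub hv
  rw [← neg_sub, ← hessian_sub hw hv]
  refine .of_dotProduct_mulVec_nonneg (by simpa using (isSymm_hessian hwv).neg) fun z => ?_
  have := fderiv_fderiv_apply_self_nonpos_of_isLocalMax hmax hwv (WithLp.toLp 2 z)
  rw [star_trivial, Matrix.neg_mulVec, dotProduct_neg, dotProduct_hessian_mulVec hwv]
  exact neg_nonneg.mpr this

end Hessian

section ExtremalOperator

variable {d : ℕ} {A : Matrix (Fin d) (Fin d) ℝ} {θ M c : ℝ}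
  {v w : EuclideanSpace ℝ (Fin d) → ℝ} {x : EuclideanSpace ℝ (Fin d)}

/-- The extremal operator `tr(A D²w) + M|∇w| + c|w|` at the point `x`: the supremum of
`tr(A D²w) + b·∇w + r w` over all drifts `|b| ≤ M` and potentials `|r| ≤ c`. The matrix `A` is the
value of the diffusion coefficient at `x`. -/
noncomputable def extremalOp (A : Matrix (Fin d) (Fin d) ℝ) (M c : ℝ)
    (w : EuclideanSpace ℝ (Fin d) → ℝ) (x : EuclideanSpace ℝ (Fin d)) : ℝ :=
  (A * hessian w x).trace + M * ‖gradient w x‖ + c * |w x|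

lemma extremalOp_le_of_isLocalMax_sub (hA : ∀ z, 0 ≤ quadForm A z) (hc : 0 ≤ c)
    (hw : ContDiffAt ℝ 2 w x) (hv : ContDiffAt ℝ 2 v x) (hmax : IsLocalMax (w - v) x)
    (hle : |w x| ≤ |v x|) : extremalOp A M c w x ≤ extremalOp A M c v x := by
  have hgrad := gradient_eq_of_isLocalMax_sub (hw.differentiableAt (by norm_num))
    (hv.differentiableAt (by norm_num)) hmax
  have htrace : 0 ≤ (A * (hessian v x - hessian w x)).trace := by
    simpa using mul_trace_le_trace_mul_of_posSemidef
      (mul_dotProduct_le_of_quadForm (θ := 0) (by simpa using hA))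
      (posSemidef_hessian_sub_of_isLocalMax_sub hw hv hmax)
  rw [mul_sub, Matrix.trace_sub, sub_nonneg] at htrace
  simp only [extremalOp, hgrad]
  gcongr

lemma abs_det_fderiv_gradient_le (hθ : 0 < θ) (hA : ∀ z, θ * ‖z‖ ^ 2 ≤ quadForm A z)
    (hw : DifferentiableAt ℝ (gradient w) x) (hconc : (-hessian w x).PosSemidef)
    (hsub : 0 ≤ extremalOp A M c w x) :
    |(fderiv ℝ (gradient w) x).det| ≤ ((M * ‖gradient w x‖ + c * |w x|) / θ) ^ d := by
  have hdet : |(hessian w x).det| = (-hessian w x).det := by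
    rw [← abs_of_nonneg hconc.det_nonneg, Matrix.det_neg, abs_mul, abs_pow]
    simp
  have htrace : (-hessian w x).trace ≤ (M * ‖gradient w x‖ + c * |w x|) / θ := by
    have := mul_trace_le_trace_mul_of_posSemidef (mul_dotProduct_le_of_quadForm hA) hconc
    rw [mul_neg, Matrix.trace_neg (A * _)] at this
    rw [extremalOp] at hsub
    rw [le_div_iff₀' hθ]
    linarith
  calc |(fderiv ℝ (gradient w) x).det| = (-hessian w x).det := by rw [← det_hessian hw, hdet]
    _ ≤ (-hessian w x).trace ^ d := by simpa using det_le_trace_pow_of_posSemidef hconc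
    _ ≤ _ := pow_le_pow_left₀ hconc.trace_nonneg htrace d

end ExtremalOperator

section SmallVolume

lemma exists_isLocalMax_sub_of_norm_mul_lt {E : Type*} [NormedAddCommGroup E] [NormedSpace ℝ E]
    {Ω : Set E} {w : E → ℝ} {ℓ : E →L[ℝ] ℝ} {L : ℝ} {x₁ : E} (hΩ : IsOpen Ω)
    (hcpt : IsCompact (closure Ω)) (hw : ContinuousOn w (closure Ω))
    (hfr : ∀ x ∈ frontier Ω, w x ≤ 0) (hL : diam Ω ≤ L) (hx₁ : x₁ ∈ closure Ω)
    (hℓ : ‖ℓ‖ * L < w x₁) : ∃ x ∈ Ω, 0 < w x ∧ IsLocalMax (w - ⇑ℓ) x := by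
  obtain ⟨x, hx, hmax⟩ := hcpt.exists_isMaxOn ⟨x₁, hx₁⟩ (hw.sub ℓ.continuous.continuousOn)
  have hslope : ℓ x₁ - ℓ x ≤ ‖ℓ‖ * L := calc
    ℓ x₁ - ℓ x = ℓ (x₁ - x) := (map_sub ℓ x₁ x).symm
    _ ≤ ‖ℓ‖ * ‖x₁ - x‖ := (le_abs_self _).trans (ℓ.le_opNorm _)
    _ ≤ ‖ℓ‖ * L := by
      rw [← dist_eq_norm]
      gcongr
      exact (dist_le_diam_of_mem hcpt.isBounded hx₁ hx).trans ((diam_closure Ω).trans_le hL)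
  have hpos : 0 < w x := by
    have : w x₁ - ℓ x₁ ≤ w x - ℓ x := hmax hx₁
    linarith
  have hxΩ : x ∈ Ω := by
    by_contra hxΩ
    exact hpos.not_ge (hfr x (hΩ.frontier_eq ▸ ⟨hx, hxΩ⟩))
  exact ⟨x, hxΩ, hpos, (hmax.on_subset subset_closure).isLocalMax (hΩ.mem_nhds hxΩ)⟩

lemma addHaar_image_le_of_abs_det_fderiv_le {E : Type*} [NormedAddCommGroup E] [NormedSpace ℝ E]
    [FiniteDimensional ℝ E] [MeasurableSpace E] [BorelSpace E] (μ : Measure E)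
    [μ.IsAddHaarMeasure] {s : Set E} {f : E → E} {f' : E → E →L[ℝ] E} {K : ℝ}
    (hs : MeasurableSet s) (hf : ∀ x ∈ s, HasFDerivWithinAt f (f' x) s x)
    (hK : ∀ x ∈ s, |(f' x).det| ≤ K) : μ (f '' s) ≤ ENNReal.ofReal K * μ s := calc
  μ (f '' s) ≤ ∫⁻ x in s, ENNReal.ofReal |(f' x).det| ∂μ :=
    addHaar_image_le_lintegral_abs_det_fderiv μ hs hf
  _ ≤ ∫⁻ _ in s, ENNReal.ofReal K ∂μ :=
    setLIntegral_mono measurable_const fun x hx => ENNReal.ofReal_le_ofReal (hK x hx)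
  _ = ENNReal.ofReal K * μ s := by simp

variable {d : ℕ} {a : EuclideanSpace ℝ (Fin d) → Matrix (Fin d) (Fin d) ℝ} {θ L M c : ℝ}
  {w : EuclideanSpace ℝ (Fin d) → ℝ} {D Ω : Set (EuclideanSpace ℝ (Fin d))}
  {x₁ : EuclideanSpace ℝ (Fin d)}

lemma ball_subset_image_gradient (hΩ : IsOpen Ω) (hcpt : IsCompact (closure Ω)) (hL₀ : 0 < L)
    (hL : diam Ω ≤ L) (hθ : 0 < θ) (ha : ∀ x ∈ Ω, ∀ z, θ * ‖z‖ ^ 2 ≤ quadForm (a x) z)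
    (hM : 0 ≤ M) (hc : 0 ≤ c) (hw : ContDiffOn ℝ 2 w Ω) (hwc : ContinuousOn w (closure Ω))
    (hsub : ∀ x ∈ Ω, 0 ≤ extremalOp (a x) M c w x) (hfr : ∀ x ∈ frontier Ω, w x ≤ 0)
    (hx₁ : x₁ ∈ closure Ω) (hmax : IsMaxOn w (closure Ω) x₁) :
    ball 0 (w x₁ / L) ⊆ gradient w ''
      (Ω ∩ {x | |(fderiv ℝ (gradient w) x).det| ≤ ((M + c * L) / θ * (w x₁ / L)) ^ d}) := by
  intro p hp
  rw [mem_ball_zero_iff] at hp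
  obtain ⟨x, hxΩ, hpos, hloc⟩ := exists_isLocalMax_sub_of_norm_mul_lt
    (ℓ := InnerProductSpace.toDual ℝ _ p) hΩ hcpt hwc hfr hL hx₁
    (by rwa [LinearIsometryEquiv.norm_map, ← lt_div_iff₀ hL₀])
  have hwx : ContDiffAt ℝ 2 w x := hw.contDiffAt (hΩ.mem_nhds hxΩ)
  have hplane : ContDiffAt ℝ 2 (InnerProductSpace.toDual ℝ _ p) x :=
    ContinuousLinearMap.contDiff _ |>.contDiffAt
  have hgrad : gradient w x = p := by
    rw [gradient_eq_of_isLocalMax_sub (hwx.differentiableAt (by norm_num))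
      (hplane.differentiableAt (by norm_num)) hloc, gradient_toDual]
  have hconc : (-hessian w x).PosSemidef := by
    simpa [hessian_toDual] using posSemidef_hessian_sub_of_isLocalMax_sub hwx hplane hloc
  refine ⟨x, ⟨hxΩ, (abs_det_fderiv_gradient_le hθ (ha x hxΩ)
    (differentiableAt_gradient_of_contDiffAt_two hwx) hconc (hsub x hxΩ)).trans ?_⟩, hgrad⟩
  rw [hgrad, abs_of_pos hpos]
  have hle : w x ≤ w x₁ := hmax (subset_closure hxΩ)
  have hscale : (M + c * L) / θ * (w x₁ / L) = (M * (w x₁ / L) + c * w x₁) / θ := by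
    field_simp
  rw [hscale]
  gcongr

lemma nonpos_of_extremalOp_nonneg_of_volume_lt (hΩ : IsOpen Ω) (hcpt : IsCompact (closure Ω))
    (hL₀ : 0 < L) (hL : diam Ω ≤ L) (hθ : 0 < θ)
    (ha : ∀ x ∈ Ω, ∀ z, θ * ‖z‖ ^ 2 ≤ quadForm (a x) z)
    (hM : 0 ≤ M) (hc : 0 ≤ c) (hw : ContDiffOn ℝ 2 w Ω) (hwc : ContinuousOn w (closure Ω))
    (hsub : ∀ x ∈ Ω, 0 ≤ extremalOp (a x) M c w x) (hfr : ∀ x ∈ frontier Ω, w x ≤ 0)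
    (hvol : ENNReal.ofReal (((M + c * L) / θ) ^ d) * volume Ω <
      volume (ball (0 : EuclideanSpace ℝ (Fin d)) 1)) {x : EuclideanSpace ℝ (Fin d)}
    (hx : x ∈ Ω) : w x ≤ 0 := by
  by_contra! hpos
  obtain ⟨x₁, hx₁, hmax⟩ := hcpt.exists_isMaxOn ⟨x, subset_closure hx⟩ hwc
  have hm : 0 < w x₁ / L := div_pos (hpos.trans_le (hmax (subset_closure hx))) hL₀
  set κ := (M + c * L) / θ
  set S := Ω ∩ {y | |(fderiv ℝ (gradient w) y).det| ≤ (κ * (w x₁ / L)) ^ d}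
  have hS : MeasurableSet S := hΩ.measurableSet.inter (measurableSet_le
    (ContinuousLinearMap.continuous_det.measurable.comp (measurable_fderiv ℝ _)).norm
    measurable_const)
  have hderiv : ∀ y ∈ S, HasFDerivWithinAt (gradient w) (fderiv ℝ (gradient w) y) S y :=
    fun y hy => (differentiableAt_gradient_of_contDiffAt_two
      (hw.contDiffAt (hΩ.mem_nhds hy.1))).hasFDerivAt.hasFDerivWithinAt
  have hball : volume (ball (0 : EuclideanSpace ℝ (Fin d)) (w x₁ / L)) =
      ENNReal.ofReal ((w x₁ / L) ^ d) * volume (ball (0 : EuclideanSpace ℝ (Fin d)) 1) := by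
    rw [Measure.addHaar_ball_of_pos _ _ hm, finrank_euclideanSpace_fin]
  refine lt_irrefl (volume (ball (0 : EuclideanSpace ℝ (Fin d)) (w x₁ / L))) ?_
  calc volume (ball 0 (w x₁ / L)) ≤ volume (gradient w '' S) := measure_mono
        (ball_subset_image_gradient hΩ hcpt hL₀ hL hθ ha hM hc hw hwc hsub hfr hx₁ hmax)
    _ ≤ ENNReal.ofReal ((κ * (w x₁ / L)) ^ d) * volume S :=
      addHaar_image_le_of_abs_det_fderiv_le volume hS hderiv fun y hy => hy.2
    _ ≤ ENNReal.ofReal ((w x₁ / L) ^ d) * (ENNReal.ofReal (κ ^ d) * volume Ω) := by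
      rw [← mul_assoc, ← ENNReal.ofReal_mul (by positivity), ← mul_pow, mul_comm κ]
      gcongr
      exact inter_subset_left
    _ < _ := by
      rw [hball]
      exact ENNReal.mul_lt_mul_right (by positivity) ENNReal.ofReal_ne_top hvol

lemma exists_isCompact_forall_nonpos (hD : IsOpen D) (hbdd : Bornology.IsBounded D) (hθ : 0 < θ)
    (ha : ∀ x ∈ D, ∀ z, θ * ‖z‖ ^ 2 ≤ quadForm (a x) z) (hM : 0 ≤ M) (hc : 0 ≤ c) :
    ∃ K ⊆ D, IsCompact K ∧ ∀ w : EuclideanSpace ℝ (Fin d) → ℝ, ContDiffOn ℝ 2 w D →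
      ContinuousOn w (closure D) → (∀ x ∈ D, 0 ≤ extremalOp (a x) M c w x) →
      (∀ x ∈ frontier D, w x ≤ 0) → (∀ x ∈ K, w x ≤ 0) → ∀ x ∈ D, w x ≤ 0 := by
  have hL₀ : 0 < diam D + 1 := by positivity
  obtain ⟨ε, hε₀, hε⟩ := ENNReal.exists_nnreal_pos_mul_lt
    (ENNReal.ofReal_ne_top (r := ((M + c * (diam D + 1)) / θ) ^ d))
    (measure_ball_pos volume (0 : EuclideanSpace ℝ (Fin d)) one_pos).ne'
  obtain ⟨K, hKD, hK, hvol⟩ := hD.measurableSet.exists_isCompact_sdiff_lt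
    (hbdd.measure_lt_top (μ := volume)).ne (ENNReal.coe_pos.mpr hε₀).ne'
  refine ⟨K, hKD, hK, fun w hw hwc hsub hfr hwK x hx => ?_⟩
  by_cases hxK : x ∈ K
  · exact hwK x hxK
  have hΩ : IsOpen (D \ K) := hD.sdiff hK.isClosed
  have hfrΩ : ∀ y ∈ frontier (D \ K), w y ≤ 0 := by
    rw [hΩ.frontier_eq]
    rintro y ⟨hy, hyΩ⟩
    by_cases hyD : y ∈ D
    · exact hwK y (not_not.mp fun hyK => hyΩ ⟨hyD, hyK⟩)
    · exact hfr y (hD.frontier_eq ▸ ⟨closure_mono sdiff_subset hy, hyD⟩)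
  have hdiam : diam (D \ K) ≤ diam D + 1 := (diam_mono sdiff_subset hbdd).trans (by simp)
  refine nonpos_of_extremalOp_nonneg_of_volume_lt hΩ
    (hbdd.subset sdiff_subset).isCompact_closure hL₀ hdiam hθ (fun y hy => ha y hy.1) hM hc
    (hw.mono sdiff_subset) (hwc.mono (closure_mono sdiff_subset)) (fun y hy => hsub y hy.1) hfrΩ
    ?_ ⟨hx, hxK⟩
  calc _ ≤ ENNReal.ofReal (((M + c * (diam D + 1)) / θ) ^ d) * ε := by gcongr
    _ < _ := by rwa [mul_comm]

end SmallVolume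

section HopfBarrier

variable {F : Type*} [NormedAddCommGroup F] {p x : F} {α R m : ℝ}

/-- Hopf's barrier on the ball of radius `R` around `p`. It vanishes on the bounding sphere, is
negative inside, and for large `α` is a strict supersolution of the extremal operator away from
the centre. -/
noncomputable def hopfBarrier (p : F) (α R m : ℝ) (y : F) : ℝ :=
  m * (Real.exp (-α * R ^ 2) - Real.exp (-α * ‖y - p‖ ^ 2))

lemma hopfBarrier_of_mem_sphere (hx : x ∈ sphere p R) : hopfBarrier p α R m x = 0 := by
  rw [hopfBarrier, mem_sphere_iff_norm.mp hx, sub_self, mul_zero]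

lemma hopfBarrier_neg (hα : 0 < α) (hm : 0 < m) (hx : x ∈ ball p R) :
    hopfBarrier p α R m x < 0 := by
  have hlt : ‖x - p‖ ^ 2 < R ^ 2 :=
    pow_lt_pow_left₀ (mem_ball_iff_norm.mp hx) (norm_nonneg _) two_ne_zero
  refine mul_neg_of_pos_of_neg hm (sub_neg.mpr (Real.exp_lt_exp.mpr ?_))
  exact mul_lt_mul_of_neg_left hlt (neg_neg_of_pos hα)

lemma neg_lt_hopfBarrier (hα : 0 ≤ α) (hm : 0 < m) : -m < hopfBarrier p α R m x := by
  have hle : Real.exp (-α * ‖x - p‖ ^ 2) ≤ 1 :=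
    Real.exp_le_one_iff.mpr (mul_nonpos_of_nonpos_of_nonneg (neg_nonpos.mpr hα) (sq_nonneg _))
  have hpos := Real.exp_pos (-α * R ^ 2)
  rw [hopfBarrier, ← mul_neg_one]
  gcongr
  linarith

variable [InnerProductSpace ℝ F]

lemma contDiff_hopfBarrier {n : WithTop ℕ∞} (p : F) (α R m : ℝ) :
    ContDiff ℝ n (hopfBarrier p α R m) :=
  contDiff_const.mul (contDiff_const.sub
    (contDiff_const.mul ((contDiff_id.sub contDiff_const).norm_sq ℝ)).exp)

lemma hasFDerivAt_exp_neg_mul_norm_sub_sq (p : F) (α : ℝ) (x : F) :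
    HasFDerivAt (fun y => Real.exp (-α * ‖y - p‖ ^ 2))
      ((-2 * α * Real.exp (-α * ‖x - p‖ ^ 2)) • innerSL ℝ (x - p)) x := by
  have hsq : HasFDerivAt (fun y => ‖y - p‖ ^ 2) (2 • innerSL ℝ (x - p)) x := by
    simpa using ((hasFDerivAt_id x).sub_const p).norm_sq
  refine (hsq.const_mul (-α)).exp.congr_fderiv ?_
  module

lemma gradient_hopfBarrier [CompleteSpace F] (p : F) (α R m : ℝ) :
    gradient (hopfBarrier p α R m) =
      fun y => (2 * α * m * Real.exp (-α * ‖y - p‖ ^ 2)) • (y - p) := by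
  ext1 x
  refine HasGradientAt.gradient (hasGradientAt_iff_hasFDerivAt.mpr ?_)
  refine (((hasFDerivAt_exp_neg_mul_norm_sub_sq p α x).const_sub _).const_mul m).congr_fderiv ?_
  ext z
  simp
  ring

lemma hasFDerivAt_gradient_hopfBarrier [CompleteSpace F] (p : F) (α R m : ℝ) (x : F) :
    HasFDerivAt (gradient (hopfBarrier p α R m))
      ((2 * α * m * Real.exp (-α * ‖x - p‖ ^ 2)) • (ContinuousLinearMap.id ℝ F -
        (2 * α) • (innerSL ℝ (x - p)).smulRight (x - p))) x := by
  rw [gradient_hopfBarrier]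
  refine (((hasFDerivAt_exp_neg_mul_norm_sub_sq p α x).const_mul (2 * α * m)).fun_smul
    ((hasFDerivAt_id x).sub_const p)).congr_fderiv ?_
  ext z
  simp
  module

end HopfBarrier

section StrongMaximumPrinciple

lemma exists_pos_mul_add_lt_mul_sq {κ : ℝ} (hκ : 0 < κ) (B c : ℝ) :
    ∃ α > 0, B * α + c < κ * α ^ 2 := by
  set α := 1 + (|B| + |c|) / κ
  have hα₁ : 1 ≤ α := le_add_of_nonneg_right (by positivity)
  have hα₀ : 0 < α := one_pos.trans_le hα₁
  refine ⟨α, hα₀, ?_⟩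
  calc B * α + c ≤ |B| * α + |c| * α := by
        gcongr
        · exact le_abs_self B
        · exact (le_abs_self c).trans (le_mul_of_one_le_right (abs_nonneg c) hα₁)
    _ < (κ + |B| + |c|) * α := by nlinarith
    _ = κ * α ^ 2 := by
      simp only [α]
      field_simp
      ring

variable {d : ℕ} {A : Matrix (Fin d) (Fin d) ℝ}
  {a : EuclideanSpace ℝ (Fin d) → Matrix (Fin d) (Fin d) ℝ} {θ Λ τ M c α ρ R m : ℝ}
  {w : EuclideanSpace ℝ (Fin d) → ℝ} {D : Set (EuclideanSpace ℝ (Fin d))}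
  {p x y : EuclideanSpace ℝ (Fin d)}

lemma hessian_hopfBarrier (p : EuclideanSpace ℝ (Fin d)) (α R m : ℝ)
    (x : EuclideanSpace ℝ (Fin d)) :
    hessian (hopfBarrier p α R m) x = (2 * α * m * Real.exp (-α * ‖x - p‖ ^ 2)) •
      (1 - (2 * α) • Matrix.vecMulVec (x - p).ofLp (x - p).ofLp) := by
  have hderiv := hasFDerivAt_gradient_hopfBarrier p α R m x
  ext i j
  rw [hessian_apply hderiv.differentiableAt, hderiv.fderiv]
  simp [Matrix.one_apply, Matrix.vecMulVec_apply, EuclideanSpace.inner_single_right, eq_comm]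

lemma trace_mul_hessian_hopfBarrier (A : Matrix (Fin d) (Fin d) ℝ)
    (p : EuclideanSpace ℝ (Fin d)) (α R m : ℝ) (x : EuclideanSpace ℝ (Fin d)) :
    (A * hessian (hopfBarrier p α R m) x).trace =
      2 * α * m * Real.exp (-α * ‖x - p‖ ^ 2) * (A.trace - 2 * α * quadForm A (x - p)) := by
  rw [hessian_hopfBarrier, show quadForm A (x - p) = _ from quadForm_toLp A (x - p).ofLp]
  simp [mul_sub, Matrix.trace_sub, Matrix.mul_vecMulVec, Matrix.trace_vecMulVec, dotProduct_comm]

lemma extremalOp_hopfBarrier_neg (hA : ∀ z, θ * ‖z‖ ^ 2 ≤ quadForm A z) (hτ : A.trace ≤ τ)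
    (hθ : 0 ≤ θ) (hM : 0 ≤ M) (hc : 0 ≤ c) (hα : 0 < α) (hm : 0 < m) (hρ : 0 ≤ ρ)
    (hαρ : 2 * (τ + M * R) * α + c < 4 * θ * ρ ^ 2 * α ^ 2) (hρx : ρ ≤ ‖x - p‖)
    (hxR : ‖x - p‖ ≤ R) : extremalOp A M c (hopfBarrier p α R m) x < 0 := by
  set e := Real.exp (-α * ‖x - p‖ ^ 2)
  have he : 0 < e := Real.exp_pos _
  have hgrad : ‖gradient (hopfBarrier p α R m) x‖ = 2 * α * m * e * ‖x - p‖ := by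
    rw [gradient_hopfBarrier, norm_smul, Real.norm_of_nonneg (by positivity)]
  have habs : |hopfBarrier p α R m x| ≤ m * e := by
    have hle : Real.exp (-α * R ^ 2) ≤ e := by
      refine Real.exp_le_exp.mpr (mul_le_mul_of_nonpos_left ?_ (neg_nonpos.mpr hα.le))
      gcongr
    rw [hopfBarrier, abs_mul, abs_of_pos hm, abs_of_nonpos (sub_nonpos.mpr hle)]
    gcongr
    linarith [Real.exp_pos (-α * R ^ 2)]
  have hquad : θ * ρ ^ 2 ≤ quadForm A (x - p) := le_trans (by gcongr) (hA (x - p))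
  calc extremalOp A M c (hopfBarrier p α R m) x
      ≤ 2 * α * m * e * (τ - 2 * α * (θ * ρ ^ 2)) + M * (2 * α * m * e * R) + c * (m * e) := by
        rw [extremalOp, trace_mul_hessian_hopfBarrier, hgrad]
        gcongr
    _ = m * e * (2 * (τ + M * R) * α + c - 4 * θ * ρ ^ 2 * α ^ 2) := by ring
    _ < 0 := mul_neg_of_pos_of_neg (mul_pos hm he) (sub_neg.mpr hαρ)

lemma neg_of_mem_ball_of_center_neg (hθ : 0 < θ)
    (ha : ∀ x ∈ ball p R, ∀ z, θ * ‖z‖ ^ 2 ≤ quadForm (a x) z ∧ quadForm (a x) z ≤ Λ * ‖z‖ ^ 2)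
    (hM : 0 ≤ M) (hc : 0 ≤ c) (hw : ContDiffOn ℝ 2 w (ball p R))
    (hwc : ContinuousOn w (closedBall p R)) (hsub : ∀ x ∈ ball p R, 0 ≤ extremalOp (a x) M c w x)
    (hle : ∀ x ∈ closedBall p R, w x ≤ 0) (hp : w p < 0) (hx : x ∈ ball p R) : w x < 0 := by
  have hR : 0 < R := pos_of_mem_ball hx
  obtain ⟨m, hm, hpm⟩ : ∃ m > 0, w p < -m := ⟨-w p / 2, by linarith, by linarith⟩
  obtain ⟨ρ, hρ, hρm⟩ := nhds_basis_closedBall.eventually_iff.mp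
    ((hwc.continuousAt (closedBall_mem_nhds p hR)).eventually_lt_const hpm)
  obtain ⟨α, hα, hαρ⟩ := exists_pos_mul_add_lt_mul_sq
    (by positivity : 0 < 4 * θ * ρ ^ 2) (2 * (d * Λ + M * R)) c
  set v := hopfBarrier p α R m
  have hv : ContDiff ℝ 2 v := contDiff_hopfBarrier p α R m
  by_contra! hwx
  obtain ⟨y, hy, hmax⟩ := (isCompact_closedBall p R).exists_isMaxOn
    ⟨x, ball_subset_closedBall hx⟩ (hwc.sub hv.continuous.continuousOn)
  have hvw : v y < w y := by
    have hxy : w x - v x ≤ w y - v y := hmax (ball_subset_closedBall hx)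
    have hvx : v x < 0 := hopfBarrier_neg hα hm hx
    linarith
  have hyball : y ∈ ball p R := by
    by_contra hyball
    have hsphere : y ∈ sphere p R := le_antisymm hy (not_lt.mp hyball)
    rw [show v y = 0 from hopfBarrier_of_mem_sphere hsphere] at hvw
    exact hvw.not_ge (hle y hy)
  have hρy : ρ ≤ ‖y - p‖ := by
    by_contra! hyρ
    have hvy : -m < v y := neg_lt_hopfBarrier hα.le hm
    exact lt_asymm (hvy.trans hvw) (hρm (mem_closedBall_iff_norm.mpr hyρ.le))
  have hnonneg : ∀ z, 0 ≤ quadForm (a y) z := fun z =>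
    (mul_nonneg hθ.le (sq_nonneg _)).trans (ha y hyball z).1
  have htouch := extremalOp_le_of_isLocalMax_sub (M := M) hnonneg hc
    (hw.contDiffAt (isOpen_ball.mem_nhds hyball)) hv.contDiffAt
    (hmax.isLocalMax (closedBall_mem_nhds_of_mem hyball))
    (abs_le_abs_of_nonpos (hle y hy) hvw.le)
  have hneg : extremalOp (a y) M c v y < 0 := extremalOp_hopfBarrier_neg
    (fun z => (ha y hyball z).1) (trace_le_of_quadForm_le fun z => (ha y hyball z).2) hθ.le hM hc
    hα hm hρ.le hαρ hρy (mem_closedBall_iff_norm.mp hy)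
  exact hneg.not_ge ((hsub y hyball).trans htouch)

lemma eq_zero_of_extremalOp_nonneg (hD : IsOpen D) (hconn : IsPreconnected D) (hθ : 0 < θ)
    (ha : ∀ x ∈ D, ∀ z, θ * ‖z‖ ^ 2 ≤ quadForm (a x) z ∧ quadForm (a x) z ≤ Λ * ‖z‖ ^ 2)
    (hM : 0 ≤ M) (hc : 0 ≤ c) (hw : ContDiffOn ℝ 2 w D)
    (hsub : ∀ x ∈ D, 0 ≤ extremalOp (a x) M c w x) (hle : ∀ x ∈ D, w x ≤ 0) (hy : y ∈ D)
    (hwy : w y = 0) (hx : x ∈ D) : w x = 0 := by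
  by_contra hwx
  have hopen : IsOpen (D ∩ w ⁻¹' Iio 0) :=
    hw.continuousOn.isOpen_inter_preimage hD isOpen_Iio
  have hclosed : closure (D ∩ w ⁻¹' Iio 0) ∩ D ⊆ D ∩ w ⁻¹' Iio 0 := by
    rintro z ⟨hz, hzD⟩
    obtain ⟨R, hR, hRD⟩ := Metric.isOpen_iff.mp hD z hzD
    obtain ⟨p, ⟨-, hp⟩, hzp⟩ := Metric.mem_closure_iff.mp hz (R / 2) (half_pos hR)
    have hball : closedBall p (R / 2) ⊆ D := fun q hq => hRD <| by
      rw [mem_ball]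
      linarith [dist_triangle q p z, mem_closedBall.mp hq, dist_comm z p]
    have hball' := ball_subset_closedBall.trans hball
    exact ⟨hzD, neg_of_mem_ball_of_center_neg hθ (fun q hq => ha q (hball' hq)) hM hc
      (hw.mono hball') (hw.continuousOn.mono hball) (fun q hq => hsub q (hball' hq))
      (fun q hq => hle q (hball hq)) hp hzp⟩
  have hneg := hconn.subset_of_closure_inter_subset hopen
    ⟨x, hx, hx, (hle x hx).lt_of_ne hwx⟩ hclosed hy
  exact hneg.2.ne hwy

end StrongMaximumPrinciple

section SemilinearOperator

lemma ciInf_sub_ciInf_le {ι : Type*} [Nonempty ι] {f g : ι → ℝ} {B : ℝ}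
    (hf : BddBelow (range f)) (h : ∀ i, f i - g i ≤ B) : (⨅ i, f i) - ⨅ i, g i ≤ B :=
  sub_le_comm.mp <| le_ciInf fun i => by linarith [ciInf_le hf i, h i]

lemma abs_inner_add_mul_le {F : Type*} [SeminormedAddCommGroup F] [InnerProductSpace ℝ F]
    {b : F} {r M r₀ : ℝ} (hb : ‖b‖ ≤ M) (hr : |r| ≤ r₀) (p : F) (s : ℝ) :
    |inner ℝ b p + r * s| ≤ M * ‖p‖ + r₀ * |s| := calc
  |inner ℝ b p + r * s| ≤ |inner ℝ b p| + |r * s| := abs_add_le _ _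
  _ ≤ ‖b‖ * ‖p‖ + |r| * |s| := by
    rw [abs_mul]
    gcongr
    exact abs_real_inner_le_norm b p
  _ ≤ M * ‖p‖ + r₀ * |s| := by gcongr

variable {d : ℕ} {U : Type*} {a : EuclideanSpace ℝ (Fin d) → Matrix (Fin d) (Fin d) ℝ}
  {b : EuclideanSpace ℝ (Fin d) → U → EuclideanSpace ℝ (Fin d)}
  {r : EuclideanSpace ℝ (Fin d) → U → ℝ} {M r₀ lam t : ℝ}
  {φ ψ : EuclideanSpace ℝ (Fin d) → ℝ} {x : EuclideanSpace ℝ (Fin d)}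

lemma Gop_eq_trace_add_iInf (hφ : ContDiffAt ℝ 2 φ x) :
    Gop a b r φ x = (a x * hessian φ x).trace +
      ⨅ u, (inner ℝ (b x u) (gradient φ x) + r x u * φ x) := by
  rw [Gop, ← isSymm_hessian hφ]
  simp only [Matrix.trace, Matrix.diag_apply, Matrix.mul_apply, Matrix.transpose_apply, hessian,
    Matrix.of_apply]

lemma Gop_const_smul (ht : 0 ≤ t) (ψ : EuclideanSpace ℝ (Fin d) → ℝ)
    (x : EuclideanSpace ℝ (Fin d)) : Gop a b r (t • ψ) x = t * Gop a b r ψ x := by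
  simp only [Gop, sdv_const_smul, gradient_const_smul, mul_add, Real.mul_iInf_of_nonneg ht,
    Finset.mul_sum, Pi.smul_apply, inner_smul_right, smul_eq_mul, mul_left_comm]

lemma Gop_sub_Gop_le_extremalOp [Nonempty U] (hb : ∀ u, ‖b x u‖ ≤ M) (hr : ∀ u, |r x u| ≤ r₀)
    (hφ : ContDiffAt ℝ 2 φ x) (hψ : ContDiffAt ℝ 2 ψ x) :
    Gop a b r φ x - Gop a b r ψ x ≤ extremalOp (a x) M r₀ (φ - ψ) x := by
  have hbdd : BddBelow (range fun u => inner ℝ (b x u) (gradient φ x) + r x u * φ x) := by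
    refine ⟨-(M * ‖gradient φ x‖ + r₀ * |φ x|), ?_⟩
    rintro _ ⟨u, rfl⟩
    exact neg_le_of_abs_le (abs_inner_add_mul_le (hb u) (hr u) _ _)
  have hgrad := gradient_sub (hφ.differentiableAt (by norm_num)) (hψ.differentiableAt (by norm_num))
  have hfirst := ciInf_sub_ciInf_le hbdd
    (g := fun u => inner ℝ (b x u) (gradient ψ x) + r x u * ψ x)
    (B := M * ‖gradient (φ - ψ) x‖ + r₀ * |(φ - ψ) x|) fun u => by
      have := le_of_abs_le (abs_inner_add_mul_le (hb u) (hr u) (gradient (φ - ψ) x) ((φ - ψ) x))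
      rw [hgrad, inner_sub_right, Pi.sub_apply] at this
      rw [hgrad, Pi.sub_apply]
      linarith
  rw [Gop_eq_trace_add_iInf hφ, Gop_eq_trace_add_iInf hψ, extremalOp, hessian_sub hφ hψ, mul_sub,
    Matrix.trace_sub]
  linarith

lemma extremalOp_sub_const_smul_nonneg [Nonempty U] (hb : ∀ u, ‖b x u‖ ≤ M)
    (hr : ∀ u, |r x u| ≤ r₀) (hφ : ContDiffAt ℝ 2 φ x) (hψ : ContDiffAt ℝ 2 ψ x)
    (hφ_sup : lam * φ x ≤ Gop a b r φ x) (hψ_sub : Gop a b r ψ x ≤ lam * ψ x) (ht : 0 ≤ t) :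
    0 ≤ extremalOp (a x) M (r₀ + |lam|) (φ - t • ψ) x := by
  have htψ : ContDiffAt ℝ 2 (t • ψ) x := hψ.const_smul t
  have hdiff := Gop_sub_Gop_le_extremalOp (a := a) hb hr hφ htψ
  have hlam : -(|lam| * |(φ - t • ψ) x|) ≤ lam * (φ - t • ψ) x := by
    rw [← abs_mul]
    exact neg_abs_le _
  calc 0 ≤ lam * φ x - t * (lam * ψ x) + |lam| * |(φ - t • ψ) x| := by
        simp only [Pi.sub_apply, Pi.smul_apply, smul_eq_mul] at hlam ⊢
        linarith
    _ ≤ Gop a b r φ x - Gop a b r (t • ψ) x + |lam| * |(φ - t • ψ) x| := by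
        rw [Gop_const_smul ht]
        gcongr
    _ ≤ extremalOp (a x) M r₀ (φ - t • ψ) x + |lam| * |(φ - t • ψ) x| := by gcongr
    _ = extremalOp (a x) M (r₀ + |lam|) (φ - t • ψ) x := by
        simp only [extremalOp]
        ring

end SemilinearOperator

section Comparison

lemma exists_pos_forall_le_mul_and_eq {X : Type*} [TopologicalSpace X] {K : Set X} {φ ψ : X → ℝ}
    (hK : IsCompact K) (hφ : ContinuousOn φ K) (hψ : ContinuousOn ψ K) (hpos : ∀ x ∈ K, 0 < ψ x)
    {x₀ : X} (hx₀ : x₀ ∈ K) (hφx₀ : 0 < φ x₀) :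
    ∃ t > 0, (∀ x ∈ K, φ x ≤ t * ψ x) ∧ ∃ y ∈ K, φ y = t * ψ y := by
  obtain ⟨y, hy, hmax⟩ := hK.exists_isMaxOn ⟨x₀, hx₀⟩ (hφ.div hψ fun x hx => (hpos x hx).ne')
  refine ⟨φ y / ψ y, (div_pos hφx₀ (hpos x₀ hx₀)).trans_le (hmax hx₀), fun x hx => ?_, y, hy, ?_⟩
  · exact (div_le_iff₀ (hpos x hx)).mp (hmax hx)
  · exact (div_mul_cancel₀ _ (hpos y hy).ne').symm

variable {d : ℕ} {U : Type*} [Nonempty U] {D : Set (EuclideanSpace ℝ (Fin d))}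
  {a : EuclideanSpace ℝ (Fin d) → Matrix (Fin d) (Fin d) ℝ}
  {b : EuclideanSpace ℝ (Fin d) → U → EuclideanSpace ℝ (Fin d)}
  {r : EuclideanSpace ℝ (Fin d) → U → ℝ} {θ Λ M r₀ lam : ℝ}
  {ψ φ : EuclideanSpace ℝ (Fin d) → ℝ} {x₀ : EuclideanSpace ℝ (Fin d)}

theorem comparison_simplicity_bounded_domain_general
    (hD_open : IsOpen D) (hD_conn : IsPreconnected D) (hD_bdd : Bornology.IsBounded D)
    (hθ : 0 < θ)
    (ha : ∀ x ∈ D, ∀ z, θ * ‖z‖ ^ 2 ≤ quadForm (a x) z ∧ quadForm (a x) z ≤ Λ * ‖z‖ ^ 2)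
    (hb : ∀ x ∈ D, ∀ u, ‖b x u‖ ≤ M) (hr : ∀ x ∈ D, ∀ u, |r x u| ≤ r₀)
    (hψ_reg : ContDiffOn ℝ 2 ψ D) (hψ_cont : ContinuousOn ψ (closure D))
    (hφ_reg : ContDiffOn ℝ 2 φ D) (hφ_cont : ContinuousOn φ (closure D))
    (hψ_sub : ∀ x ∈ D, Gop a b r ψ x ≤ lam * ψ x) (hψ_pos : ∀ x ∈ D, 0 < ψ x)
    (hφ_sup : ∀ x ∈ D, lam * φ x ≤ Gop a b r φ x) (hφ_bd : ∀ x ∈ frontier D, φ x ≤ 0)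
    (hx₀ : x₀ ∈ D) (hφx₀ : 0 < φ x₀) :
    ∃ t : ℝ, 0 < t ∧ ∀ x ∈ closure D, ψ x = t * φ x := by
  obtain ⟨u⟩ := ‹Nonempty U›
  have hM : 0 ≤ M := (norm_nonneg _).trans (hb x₀ hx₀ u)
  have hc : 0 ≤ r₀ + |lam| := add_nonneg ((abs_nonneg _).trans (hr x₀ hx₀ u)) (abs_nonneg lam)
  obtain ⟨K, hKD, hK, hmaxPrinciple⟩ := exists_isCompact_forall_nonpos hD_open hD_bdd hθ
    (fun x hx z => (ha x hx z).1) hM hc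
  have hKD' : insert x₀ K ⊆ D := insert_subset hx₀ hKD
  obtain ⟨t, ht, hle, y, hyK, hy⟩ := exists_pos_forall_le_mul_and_eq (hK.insert x₀)
    (hφ_reg.continuousOn.mono hKD') (hψ_reg.continuousOn.mono hKD')
    (fun x hx => hψ_pos x (hKD' hx)) (mem_insert x₀ K) hφx₀
  have hw_reg : ContDiffOn ℝ 2 (φ - t • ψ) D := hφ_reg.sub (contDiffOn_const.smul hψ_reg)
  have hw_cont : ContinuousOn (φ - t • ψ) (closure D) := hφ_cont.sub (hψ_cont.const_smul t)
  have hw_sub : ∀ x ∈ D, 0 ≤ extremalOp (a x) M (r₀ + |lam|) (φ - t • ψ) x := fun x hx =>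
    extremalOp_sub_const_smul_nonneg (hb x hx) (hr x hx) (hφ_reg.contDiffAt (hD_open.mem_nhds hx))
      (hψ_reg.contDiffAt (hD_open.mem_nhds hx)) (hφ_sup x hx) (hψ_sub x hx) ht.le
  have hψ_nonneg : ∀ x ∈ closure D, 0 ≤ ψ x := fun x hx =>
    isClosed_Ici.closure_subset <|
      MapsTo.closure_of_continuousOn (fun z hz => (hψ_pos z hz).le) hψ_cont hx
  have hw_bd : ∀ x ∈ frontier D, (φ - t • ψ) x ≤ 0 := fun x hx =>
    sub_nonpos.mpr <| (hφ_bd x hx).trans <|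
      mul_nonneg ht.le (hψ_nonneg x (frontier_subset_closure hx))
  have hw_nonpos := hmaxPrinciple _ hw_reg hw_cont hw_sub hw_bd fun x hx =>
    sub_nonpos.mpr (hle x (mem_insert_of_mem x₀ hx))
  have hw_zero : EqOn φ (t • ψ) D := fun x hx => sub_eq_zero.mp <|
    eq_zero_of_extremalOp_nonneg hD_open hD_conn hθ ha hM hc hw_reg hw_sub hw_nonpos (hKD' hyK)
      (sub_eq_zero.mpr hy) hx
  have hφ_eq := hw_zero.of_subset_closure hφ_cont (hψ_cont.const_smul t) subset_closure subset_rfl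
  refine ⟨t⁻¹, inv_pos.mpr ht, fun x hx => ?_⟩
  rw [hφ_eq hx, Pi.smul_apply, smul_eq_mul, inv_mul_cancel_left₀ ht.ne']

end Comparison

end

/-- **Theorem A.4: comparison/simplicity theorem on bounded domains,
classical-solution rendering.** If `Gψ ≤ λψ` in `D` with `ψ > 0` in `D`, `Gφ ≥ λφ` in `D`,
`φ ≤ 0` on `∂D`, and `φ(x₀) > 0` for some `x₀ ∈ D`, then `ψ = t·φ` for some `t > 0`. -/
theorem comparison_simplicity_bounded_domain
    {d : ℕ} (hd : 1 ≤ d) {U : Type*} [MetricSpace U] [CompactSpace U] [Nonempty U]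
    (D : Set (EuclideanSpace ℝ (Fin d)))
    (hD_ne : D.Nonempty) (hD_open : IsOpen D) (hD_conn : IsConnected D)
    (hD_bdd : Bornology.IsBounded D)
    (a : EuclideanSpace ℝ (Fin d) → Matrix (Fin d) (Fin d) ℝ)
    (b : EuclideanSpace ℝ (Fin d) → U → EuclideanSpace ℝ (Fin d))
    (r : EuclideanSpace ℝ (Fin d) → U → ℝ)
    -- `a` measurable, symmetric, uniformly elliptic and bounded
    (ha_meas : ∀ i j, Measurable fun x => a x i j)
    (ha_symm : ∀ x ∈ D, (a x).IsSymm)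
    (ha_ell : ∃ C : ℝ, 1 ≤ C ∧ ∀ x ∈ D, ∀ z : EuclideanSpace ℝ (Fin d),
      C⁻¹ * ‖z‖ ^ 2 ≤ quadForm (a x) z ∧ quadForm (a x) z ≤ C * ‖z‖ ^ 2)
    -- `b`, `r` bounded, measurable in `x` and continuous in `u`
    (hb_meas : ∀ u, Measurable fun x => b x u) (hb_cont : ∀ x, Continuous fun u => b x u)
    (hr_meas : ∀ u, Measurable fun x => r x u) (hr_cont : ∀ x, Continuous fun u => r x u)
    (hb_bdd : ∃ M : ℝ, ∀ x ∈ D, ∀ u, ‖b x u‖ ≤ M)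
    (hr_bdd : ∃ r₀ : ℝ, ∀ x ∈ D, ∀ u, |r x u| ≤ r₀)
    (lam : ℝ) (ψ φ : EuclideanSpace ℝ (Fin d) → ℝ)
    (hψ_reg : ContDiffOn ℝ 2 ψ D) (hψ_cont : ContinuousOn ψ (closure D))
    (hφ_reg : ContDiffOn ℝ 2 φ D) (hφ_cont : ContinuousOn φ (closure D))
    (hψ_sub : ∀ x ∈ D, Gop a b r ψ x ≤ lam * ψ x)
    (hψ_pos : ∀ x ∈ D, 0 < ψ x)
    (hφ_sup : ∀ x ∈ D, lam * φ x ≤ Gop a b r φ x)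
    (hφ_bd : ∀ x ∈ frontier D, φ x ≤ 0)
    (x₀ : EuclideanSpace ℝ (Fin d)) (hx₀ : x₀ ∈ D) (hφx₀ : 0 < φ x₀) :
    ∃ t : ℝ, 0 < t ∧ ∀ x ∈ closure D, ψ x = t * φ x := by
  obtain ⟨C, hC, ha⟩ := ha_ell
  obtain ⟨M, hb⟩ := hb_bdd
  obtain ⟨r₀, hr⟩ := hr_bdd
  exact comparison_simplicity_bounded_domain_general hD_open hD_conn.isPreconnected hD_bdd
    (inv_pos.mpr (one_pos.trans_le hC)) ha hb hr hψ_reg hψ_cont hφ_reg hφ_cont hψ_sub hψ_pos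
    hφ_sup hφ_bd hx₀ hφx₀
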